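/- Derivation of the post-selected entropy inequality of Example 3 (Pienaar's inequality): for any jointly distributed finite random variables X0, X1, Y0, Y1, Z satisfying I((X1, Z) : Y1) ≤ H(Z | X0), the inequality I(X0 : Z) - I(Y0 : Z) - I(X1 : Z) + I(Y1 : Z) ≤ H(Z) holds, where H denotes Shannon entropy, H(·|·) conditional entropy and I mutual information. -/

import Mathlib

open MeasureTheory ProbabilityTheory

/-- Shannon entropy of a finite-valued random variable `X` under the measure `μ`. -/
noncomputable def entH {Ω E : Type*} [MeasurableSpace Ω] [Fintype E]
    (μ : Measure Ω) (X : Ω → E) : ℝ :=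
  ∑ e : E, Real.negMulLog (μ (X ⁻¹' {e})).toReal

/-- Mutual information `I(X : Y)`. -/
noncomputable def mutInf {Ω E F : Type*} [MeasurableSpace Ω] [Fintype E] [Fintype F]
    (μ : Measure Ω) (X : Ω → E) (Y : Ω → F) : ℝ :=
  entH μ X + entH μ Y - entH μ (fun ω => (X ω, Y ω))

/-- Conditional Shannon entropy `H(X | Y)`. -/
noncomputable def condEnt {Ω E F : Type*} [MeasurableSpace Ω] [Fintype E] [Fintype F]
    (μ : Measure Ω) (X : Ω → E) (Y : Ω → F) : ℝ :=
  entH μ (fun ω => (X ω, Y ω)) - entH μ Y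

/-- Conditional mutual information `I(X : Y | Z)`. -/
noncomputable def condMutInf {Ω E F G : Type*} [MeasurableSpace Ω]
    [Fintype E] [Fintype F] [Fintype G]
    (μ : Measure Ω) (X : Ω → E) (Y : Ω → F) (Z : Ω → G) : ℝ :=
  entH μ (fun ω => (X ω, Z ω)) + entH μ (fun ω => (Y ω, Z ω))
    - entH μ (fun ω => (X ω, Y ω, Z ω)) - entH μ Z

lemma pw_ineq (p u v w : ℝ) (hp : 0 ≤ p) (hu : p ≤ u) (hv : p ≤ v) (hw : u ≤ w) :
    p * Real.log u + p * Real.log v - p * Real.log p - p * Real.log w ≤ u * v / w - p := by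
  rcases hp.eq_or_lt with h | h
  · subst h
    have : 0 ≤ u * v / w := by
      have : 0 ≤ w := hu.trans hw
      positivity
    simpa using this
  · have hu0 : 0 < u := h.trans_le hu
    have hv0 : 0 < v := h.trans_le hv
    have hw0 : 0 < w := hu0.trans_le hw
    have h1 := Real.log_le_sub_one_of_pos (show 0 < u * v / (p * w) by positivity)
    rw [Real.log_div (by positivity) (by positivity), Real.log_mul hu0.ne' hv0.ne',
      Real.log_mul h.ne' hw0.ne'] at h1
    have h2 := mul_le_mul_of_nonneg_left h1 h.le
    have h3 : p * (u * v / (p * w) - 1) = u * v / w - p := by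
      field_simp
    rw [h3] at h2
    linarith

lemma sub_fin {A B C : Type*} [Fintype A] [Fintype B] [Fintype C] (p : A → B → C → ℝ)
    (hp : ∀ a b c, 0 ≤ p a b c) :
    (∑ a, ∑ b, ∑ c, Real.negMulLog (p a b c)) + ∑ c, Real.negMulLog (∑ a, ∑ b, p a b c)
    ≤ (∑ a, ∑ c, Real.negMulLog (∑ b, p a b c)) + ∑ b, ∑ c, Real.negMulLog (∑ a, p a b c) := by
  have hS1 : ∀ s : C → A → B → ℝ,
      (∑ a, ∑ b, ∑ c, s c a b) = ∑ c, ∑ a, ∑ b, s c a b := by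
    intro s
    rw [Finset.sum_comm]
    simp_rw [Finset.sum_comm (γ := C) (α := A)]
    rw [Finset.sum_comm]
    refine Finset.sum_congr rfl fun c _ => Finset.sum_comm
  rw [hS1 (fun c a b => Real.negMulLog (p a b c)), Finset.sum_comm (γ := A) (α := C),
    Finset.sum_comm (γ := B) (α := C), ← Finset.sum_add_distrib, ← Finset.sum_add_distrib]
  refine Finset.sum_le_sum fun c _ => ?_
  set u : A → ℝ := fun a => ∑ b, p a b c with hu
  set v : B → ℝ := fun b => ∑ a, p a b c with hv
  set w : ℝ := ∑ a, u a with hw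
  have hvw : ∑ b, v b = w := by rw [hw, hu, hv]; exact Finset.sum_comm
  have hu0 : ∀ a, 0 ≤ u a := fun a => Finset.sum_nonneg fun b _ => hp a b c
  have key : ∑ a, ∑ b, (p a b c * Real.log (u a) + p a b c * Real.log (v b)
      - p a b c * Real.log (p a b c) - p a b c * Real.log w)
      ≤ ∑ a, ∑ b, (u a * v b / w - p a b c) := by
    refine Finset.sum_le_sum fun a _ => Finset.sum_le_sum fun b _ => ?_
    refine pw_ineq _ _ _ _ (hp a b c) ?_ ?_ ?_
    · exact Finset.single_le_sum (f := fun b => p a b c) (fun b _ => hp a b c) (Finset.mem_univ b)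
    · exact Finset.single_le_sum (f := fun a => p a b c) (fun a _ => hp a b c) (Finset.mem_univ a)
    · exact Finset.single_le_sum (f := u) (fun a _ => hu0 a) (Finset.mem_univ a)
  have hr : ∑ a, ∑ b, (u a * v b / w - p a b c) = 0 := by
    simp_rw [Finset.sum_sub_distrib, ← Finset.sum_div, ← Finset.mul_sum, hvw, ← Finset.sum_mul]
    change w * w / w - w = 0
    simp
  have h1 : ∑ a, ∑ b, p a b c * Real.log (u a) = ∑ a, u a * Real.log (u a) := by
    simp_rw [← Finset.sum_mul]; rfl
  have h2 : ∑ a, ∑ b, p a b c * Real.log (v b) = ∑ b, v b * Real.log (v b) := by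
    rw [Finset.sum_comm]; simp_rw [← Finset.sum_mul]; rfl
  have h3 : ∑ a, ∑ b, p a b c * Real.log w = w * Real.log w := by
    simp_rw [← Finset.sum_mul]; rfl
  rw [hr] at key
  simp_rw [Finset.sum_sub_distrib, Finset.sum_add_distrib] at key
  rw [h1, h2, h3] at key
  simp only [Real.negMulLog, neg_mul, Finset.sum_neg_distrib]
  linarith

lemma marg {Ω E F : Type*} [MeasurableSpace Ω] [Fintype F]
    [MeasurableSpace F] [MeasurableSingletonClass F]
    (μ : Measure Ω) [IsProbabilityMeasure μ] (X : Ω → E) (Y : Ω → F)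
    (hY : Measurable Y) (e : E) :
    (μ (X ⁻¹' {e})).toReal = ∑ f, (μ ((fun ω => (X ω, Y ω)) ⁻¹' {(e, f)})).toReal := by
  rw [← ENNReal.toReal_sum (fun _ _ => measure_ne_top _ _)]
  congr 1
  have := sum_measure_preimage_singleton (μ := μ.restrict (X ⁻¹' {e})) (f := Y) Finset.univ
    (fun f _ => hY (measurableSet_singleton f))
  simp only [Finset.coe_univ, Set.preimage_univ, Measure.restrict_apply_univ] at this
  rw [← this]
  refine Finset.sum_congr rfl fun f _ => ?_
  rw [Measure.restrict_apply (hY (measurableSet_singleton f))]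
  congr 1
  ext ω
  simp [and_comm]

lemma entH_equiv {Ω E F : Type*} [MeasurableSpace Ω] [Fintype E] [Fintype F]
    (μ : Measure Ω) (X : Ω → E) (g : E ≃ F) : entH μ (fun ω => g (X ω)) = entH μ X := by
  unfold entH
  rw [← g.sum_comp]
  refine Finset.sum_congr rfl fun e _ => ?_
  congr 3
  ext ω
  simp

lemma condMutInf_nonneg {Ω A B C : Type*} [MeasurableSpace Ω] [Fintype A] [Fintype B] [Fintype C]
    [MeasurableSpace A] [MeasurableSingletonClass A]
    [MeasurableSpace B] [MeasurableSingletonClass B]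
    (μ : Measure Ω) [IsProbabilityMeasure μ] (X : Ω → A) (Y : Ω → B) (Z : Ω → C)
    (hX : Measurable X) (hY : Measurable Y) : 0 ≤ condMutInf μ X Y Z := by
  have h := sub_fin (fun a b c => (μ ((fun ω => (X ω, Y ω, Z ω)) ⁻¹' {(a, b, c)})).toReal)
    (fun _ _ _ => ENNReal.toReal_nonneg)
  have e1 : ∀ a c, ∑ b, (μ ((fun ω => (X ω, Y ω, Z ω)) ⁻¹' {(a, b, c)})).toReal
      = (μ ((fun ω => (X ω, Z ω)) ⁻¹' {(a, c)})).toReal := by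
    intro a c
    rw [marg μ _ Y hY]
    refine Finset.sum_congr rfl fun b _ => ?_
    congr 2; ext ω; simp; tauto
  have e2 : ∀ b c, ∑ a, (μ ((fun ω => (X ω, Y ω, Z ω)) ⁻¹' {(a, b, c)})).toReal
      = (μ ((fun ω => (Y ω, Z ω)) ⁻¹' {(b, c)})).toReal := by
    intro b c
    rw [marg μ _ X hX]
    refine Finset.sum_congr rfl fun b _ => ?_
    congr 2; ext ω; simp; tauto
  have e3 : ∀ c, ∑ a, (μ ((fun ω => (X ω, Z ω)) ⁻¹' {(a, c)})).toReal
      = (μ (Z ⁻¹' {c})).toReal := by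
    intro c
    rw [marg μ _ X hX]
    refine Finset.sum_congr rfl fun b _ => ?_
    congr 2; ext ω; simp; tauto
  simp only [e1, e2, e3] at h
  unfold condMutInf entH
  simp only [Fintype.sum_prod_type]
  linarith

lemma mutInf_nonneg {Ω A B : Type*} [MeasurableSpace Ω] [Fintype A] [Fintype B]
    [MeasurableSpace A] [MeasurableSingletonClass A]
    [MeasurableSpace B] [MeasurableSingletonClass B]
    (μ : Measure Ω) [IsProbabilityMeasure μ] (X : Ω → A) (Y : Ω → B)
    (hX : Measurable X) (hY : Measurable Y) : 0 ≤ mutInf μ X Y := by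
  have h := condMutInf_nonneg μ X Y (fun _ => ()) hX hY
  unfold condMutInf at h
  have h1 := entH_equiv μ X (Equiv.prodPUnit A).symm
  have h2 := entH_equiv μ Y (Equiv.prodPUnit B).symm
  have h3 := entH_equiv μ (fun ω => (X ω, Y ω))
    ((Equiv.refl A).prodCongr (Equiv.prodPUnit B).symm)
  have h4 : entH μ (fun _ : Ω => ()) = 0 := by simp [entH]
  simp only [Equiv.prodPUnit_symm_apply, Equiv.prodCongr_apply, Prod.map, Equiv.refl_apply] at h1 h2 h3
  unfold mutInf
  change 0 ≤ entH μ (fun ω => (X ω, PUnit.unit)) + entH μ (fun ω => (Y ω, PUnit.unit))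
    - entH μ (fun ω => (X ω, Y ω, PUnit.unit)) - entH μ (fun _ : Ω => ()) at h
  rw [h1, h2, h3, h4] at h
  linarith

/-- **Pienaar's post-selected entropy inequality**: for any jointly distributed
finite random variables `X0, X1, Y0, Y1, Z` satisfying
`I((X1, Z) : Y1) ≤ H(Z | X0)`, one has
`I(X0:Z) - I(Y0:Z) - I(X1:Z) + I(Y1:Z) ≤ H(Z)`. -/
theorem pienaar_inequality {Ω E0 E1 F0 F1 G : Type*} [MeasurableSpace Ω]
    [Fintype E0] [Fintype E1] [Fintype F0] [Fintype F1] [Fintype G]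
    [MeasurableSpace E0] [MeasurableSingletonClass E0]
    [MeasurableSpace E1] [MeasurableSingletonClass E1]
    [MeasurableSpace F0] [MeasurableSingletonClass F0]
    [MeasurableSpace F1] [MeasurableSingletonClass F1]
    [MeasurableSpace G] [MeasurableSingletonClass G]
    (μ : Measure Ω) [IsProbabilityMeasure μ]
    (X0 : Ω → E0) (X1 : Ω → E1) (Y0 : Ω → F0) (Y1 : Ω → F1) (Z : Ω → G)
    (hX0 : Measurable X0) (hX1 : Measurable X1)
    (hY0 : Measurable Y0) (hY1 : Measurable Y1) (hZ : Measurable Z)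
    (hyp : mutInf μ (fun ω => (X1 ω, Z ω)) Y1 ≤ condEnt μ Z X0) :
    mutInf μ X0 Z - mutInf μ Y0 Z - mutInf μ X1 Z + mutInf μ Y1 Z ≤ entH μ Z := by
  have hA := mutInf_nonneg μ Y0 Z hY0 hZ
  have hB := mutInf_nonneg μ X1 Z hX1 hZ
  have hC := condMutInf_nonneg μ X1 Y1 Z hX1 hY1
  have s1 : entH μ (fun ω => (Z ω, X0 ω)) = entH μ (fun ω => (X0 ω, Z ω)) :=
    entH_equiv μ (fun ω => (X0 ω, Z ω)) (Equiv.prodComm _ _)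
  have s2 : entH μ (fun ω => ((X1 ω, Z ω), Y1 ω)) = entH μ (fun ω => (X1 ω, Y1 ω, Z ω)) :=
    entH_equiv μ (fun ω => (X1 ω, Y1 ω, Z ω))
      (((Equiv.refl _).prodCongr (Equiv.prodComm _ _)).trans (Equiv.prodAssoc _ _ _).symm)
  unfold condEnt at hyp
  unfold mutInf at *
  unfold condMutInf at hC
  rw [s1, s2] at hyp
  linarith
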